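/- arXiv:math/0308086 — 2 statements merged into one kernel-verified Lean document; each statement's English description precedes it below -/
import Mathlib

section
/- The Barnes G-function satisfies log G(3/4) = log G(1/4) + K/(2π) − (log 2)/8 − (log π)/4 + log Γ(1/4), where K is Catalan's constant. -/
open Real MeasureTheory Filter

/-- Hurwitz zeta function ζ(s, a) for real a > 0, via analytic continuation. -/
noncomputable def hurwitzZetaReal (s : ℂ) (a : ℝ) : ℂ :=
  HurwitzZeta.hurwitzZeta (a : UnitAddCircle) s -
    ∑ k ∈ Finset.range (⌈a⌉₊ - 1), ((a - (⌈a⌉₊ - 1) + k : ℝ) : ℂ) ^ (-s)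

/-- ζ'(-1, a): derivative of the Hurwitz zeta function w.r.t. s at s = -1. -/
noncomputable def hurwitzZetaDerivNegOne (a : ℝ) : ℂ :=
  deriv (fun s => hurwitzZetaReal s a) (-1)

/-- Logarithm of the Glaisher–Kinkelin constant: log A = 1/12 - ζ'(-1). -/
noncomputable def logA : ℂ := 1 / 12 - deriv riemannZeta (-1)

/-- log G(z+1) for z > 0, via log G(z+1) = z log Γ(z) + ζ'(-1) - ζ'(-1, z). -/
noncomputable def logBarnesG1p (z : ℝ) : ℂ :=
  z * Real.log (Real.Gamma z) + deriv riemannZeta (-1) - hurwitzZetaDerivNegOne z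

/-- log G(x) for x > 0, via the recurrence G(z+1) = Γ(z) G(z) on (0, 1]. -/
noncomputable def logBarnesG (x : ℝ) : ℂ :=
  if x ≤ 1 then logBarnesG1p x - Real.log (Real.Gamma x) else logBarnesG1p (x - 1)

/-- The Barnes G-function (for positive real argument). -/
noncomputable def barnesG (x : ℝ) : ℂ := Complex.exp (logBarnesG x)

/-- The digamma function ψ = (log Γ)'. -/
noncomputable def digamma (x : ℝ) : ℝ := deriv (fun t => Real.log (Real.Gamma t)) x

/-- The trigamma function ψ⁽¹⁾ = (log Γ)''. -/
noncomputable def trigamma (x : ℝ) : ℝ :=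
  deriv (deriv (fun t => Real.log (Real.Gamma t))) x

/-- The Clausen function Cl₂(x) = ∑_{k ≥ 1} sin(k x) / k². -/
noncomputable def clausen2 (x : ℝ) : ℝ := ∑' k : ℕ, Real.sin ((k + 1) * x) / (k + 1) ^ 2

/-- Catalan's constant. -/
noncomputable def catalanConst : ℝ := ∑' k : ℕ, (-1 : ℝ) ^ k / (2 * (k : ℝ) + 1) ^ 2

/-! `ζ(s, z) - ζ(s, 1 - z)` is twice the odd Hurwitz zeta function, whose functional equation
contains the factor `sin (π s / 2)`. At a zero of this factor the product rule leaves a single term,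
so `ζ'(-1, z) - ζ'(-1, 1 - z)` is a multiple of the sine zeta value at `2`, that is, of `Cl₂(2πz)`.
Together with Euler's reflection formula for `Γ` this gives
`log G(1 - z) - log G(1 + z) = z log (sin(πz) / π) + Cl₂(2πz) / (2π)`, and `Cl₂(π/2) = K`. -/

theorem clausen2_pi_div_two : clausen2 (π / 2) = catalanConst := by
  have sin_term (k : ℕ) : Real.sin (((2 * k : ℕ) + 1) * (π / 2)) = (-1) ^ k := by
    rw [← Real.cos_nat_mul_pi, ← Real.sin_add_pi_div_two]
    congr 1
    push_cast
    ring
  have support_subset :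
      Function.support (fun k : ℕ ↦ Real.sin ((k + 1) * (π / 2)) / (k + 1) ^ 2) ⊆
        Set.range (2 * · : ℕ → ℕ) := by
    refine Function.support_subset_iff'.mpr fun n hn ↦ ?_
    obtain ⟨k, rfl⟩ : Odd n := by
      rw [← Nat.not_even_iff_odd, even_iff_exists_two_mul]
      exact fun ⟨k, hk⟩ ↦ hn ⟨k, hk.symm⟩
    have : (((2 * k + 1 : ℕ) : ℝ) + 1) * (π / 2) = (k + 1 : ℕ) * π := by
      push_cast
      ring
    rw [this, Real.sin_nat_mul_pi, zero_div]
  rw [clausen2, catalanConst,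
    ← (mul_right_injective₀ two_ne_zero).tsum_eq support_subset]
  refine tsum_congr fun k ↦ ?_
  rw [sin_term]
  push_cast
  rfl

theorem sinZeta_two_eq_clausen2 (x : ℝ) :
    HurwitzZeta.sinZeta x 2 = clausen2 (2 * π * x) := by
  have h := HurwitzZeta.hasSum_nat_sinZeta x (s := 2) (by norm_num)
  rw [← hasSum_nat_add_iff' 1] at h
  simp only [Finset.range_one, Finset.sum_singleton, Nat.cast_zero, mul_zero, Real.sin_zero,
    Complex.ofReal_zero, zero_div, sub_zero] at h
  rw [← h.tsum_eq, clausen2, Complex.ofReal_tsum]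
  refine tsum_congr fun k ↦ ?_
  rw [mul_comm (2 * π * x)]
  norm_cast

theorem hasDerivAt_hurwitzZetaOdd_one_sub_of_sin_eq_zero (a : UnitAddCircle) {s : ℂ}
    (hs : 0 < s.re) (hsin : Complex.sin (π * s / 2) = 0) :
    HasDerivAt (fun w ↦ HurwitzZeta.hurwitzZetaOdd a (1 - w))
      (2 * (2 * π) ^ (-s) * Complex.Gamma s * HurwitzZeta.sinZeta a s *
        (Complex.cos (π * s / 2) * (π / 2))) s := by
  let f : ℂ → ℂ := fun w ↦ 2 * (2 * π) ^ (-w) * Complex.Gamma w * HurwitzZeta.sinZeta a w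
  have two_pi_ne_zero : (2 * π : ℂ) ≠ 0 := by exact_mod_cast Real.two_pi_pos.ne'
  have ne_neg_nat {w : ℂ} (hw : 0 < w.re) (n : ℕ) : w ≠ -n := by
    rintro rfl
    simp only [Complex.neg_re, Complex.natCast_re] at hw
    linarith [n.cast_nonneg (α := ℝ)]
  have hf : DifferentiableAt ℂ f s :=
    (((differentiableAt_id.neg.const_cpow (.inl two_pi_ne_zero)).const_mul 2).mul
      (Complex.differentiableAt_Gamma s (ne_neg_nat hs))).mul
      (HurwitzZeta.differentiableAt_sinZeta a s)
  have sin_deriv : HasDerivAt (fun w : ℂ ↦ Complex.sin (π * w / 2))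
      (Complex.cos (π * s / 2) * (π / 2)) s := by
    simpa only [id_eq, mul_one] using (((hasDerivAt_id s).const_mul (π : ℂ)).div_const 2).csin
  have functional_equation : (fun w ↦ HurwitzZeta.hurwitzZetaOdd a (1 - w)) =ᶠ[nhds s]
      f * fun w ↦ Complex.sin (π * w / 2) := by
    filter_upwards [Complex.continuous_re.continuousAt.eventually (lt_mem_nhds hs)] with w hw
    rw [HurwitzZeta.hurwitzZetaOdd_one_sub a (ne_neg_nat hw), Pi.mul_apply]
    ring
  have product_deriv := (hf.hasDerivAt.mul sin_deriv).congr_of_eventuallyEq functional_equation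
  rwa [hsin, mul_zero, zero_add] at product_deriv

theorem hasDerivAt_hurwitzZetaOdd_neg_odd (a : UnitAddCircle) (k : ℕ) :
    HasDerivAt (HurwitzZeta.hurwitzZetaOdd a)
      ((-1) ^ k * (2 * k + 1).factorial / (2 * (2 * π) ^ (2 * k + 1)) *
        HurwitzZeta.sinZeta a (2 * k + 2)) (-(2 * k + 1)) := by
  have half_angle : (π : ℂ) * (2 * k + 2) / 2 = k * π + π := by ring
  have sin_eq_zero : Complex.sin (π * (2 * k + 2) / 2) = 0 := by
    rw [half_angle, Complex.sin_add_pi, Complex.sin_nat_mul_pi, neg_zero]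
  have cos_eq : Complex.cos (π * (2 * k + 2) / 2) = -(-1) ^ k := by
    rw [half_angle, Complex.cos_add_pi]
    congr 1
    exact_mod_cast Real.cos_nat_mul_pi k
  have Gamma_eq : Complex.Gamma (2 * k + 2) = (2 * k + 1).factorial := by
    rw [← Complex.Gamma_nat_eq_factorial]
    push_cast
    ring_nf
  have cpow_eq : (2 * π : ℂ) ^ (-(2 * k + 2) : ℂ) = ((2 * π : ℂ) ^ (2 * k + 2))⁻¹ := by
    rw [Complex.cpow_neg]
    congr 1
    exact_mod_cast Complex.cpow_natCast (2 * π) (2 * k + 2)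
  have re_pos : 0 < (2 * k + 2 : ℂ).re := by
    norm_cast
    positivity
  have one_sub_neg : (1 - -(2 * k + 1) : ℂ) = 2 * k + 2 := by ring
  have one_sub_deriv := hasDerivAt_hurwitzZetaOdd_one_sub_of_sin_eq_zero a re_pos sin_eq_zero
  rw [← one_sub_neg] at one_sub_deriv
  have deriv_at_neg_odd := one_sub_deriv.comp_const_sub (1 : ℂ) (-(2 * k + 1) : ℂ)
  simp only [sub_sub_cancel, one_sub_neg, cos_eq, Gamma_eq, cpow_eq] at deriv_at_neg_odd
  refine deriv_at_neg_odd.congr_deriv ?_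
  field_simp
  ring

theorem hasDerivAt_hurwitzZetaOdd_neg_one (x : ℝ) :
    HasDerivAt (HurwitzZeta.hurwitzZetaOdd x) (clausen2 (2 * π * x) / (4 * π)) (-1) := by
  have h := hasDerivAt_hurwitzZetaOdd_neg_odd x 0
  simp only [Nat.cast_zero, mul_zero, zero_add, pow_zero, pow_one, Nat.factorial_one,
    Nat.cast_one, mul_one, sinZeta_two_eq_clausen2] at h
  refine h.congr_deriv ?_
  ring

theorem hurwitzZetaReal_of_le_one {z : ℝ} (hz : z ≤ 1) (s : ℂ) :
    hurwitzZetaReal s z = HurwitzZeta.hurwitzZeta z s := by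
  have : ⌈z⌉₊ - 1 = 0 := Nat.sub_eq_zero_of_le (Nat.ceil_le.mpr (by exact_mod_cast hz))
  simp only [hurwitzZetaReal, this, Finset.range_zero, Finset.sum_empty, sub_zero]

theorem hurwitzZetaDerivNegOne_sub_one_sub {z : ℝ} (hz₀ : 0 ≤ z) (hz₁ : z ≤ 1) :
    hurwitzZetaDerivNegOne z - hurwitzZetaDerivNegOne (1 - z) =
      clausen2 (2 * π * z) / (2 * π) := by
  have differentiableAt (a : UnitAddCircle) :
      DifferentiableAt ℂ (HurwitzZeta.hurwitzZeta a) (-1) :=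
    HurwitzZeta.differentiableAt_hurwitzZeta a (by norm_num)
  have coe_one_sub : ((1 - z : ℝ) : UnitAddCircle) = -(z : UnitAddCircle) := by
    rw [AddCircle.coe_sub, AddCircle.coe_period, zero_sub]
  have sub_eq_odd : HurwitzZeta.hurwitzZeta z - HurwitzZeta.hurwitzZeta (-(z : UnitAddCircle)) =
      fun s ↦ 2 * HurwitzZeta.hurwitzZetaOdd z s := by
    ext s
    rw [HurwitzZeta.hurwitzZetaOdd_eq, Pi.sub_apply]
    ring
  simp only [hurwitzZetaDerivNegOne, hurwitzZetaReal_of_le_one hz₁,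
    hurwitzZetaReal_of_le_one (sub_le_self 1 hz₀), coe_one_sub]
  rw [← deriv_sub (differentiableAt _) (differentiableAt _), sub_eq_odd,
    ((hasDerivAt_hurwitzZetaOdd_neg_one z).const_mul 2).deriv]
  ring

theorem log_Gamma_add_log_Gamma_one_sub {z : ℝ} (hz₀ : 0 < z) (hz₁ : z < 1) :
    Real.log (Real.Gamma z) + Real.log (Real.Gamma (1 - z)) =
      -Real.log (Real.sin (π * z) / π) := by
  have Gamma_ne_zero := (Real.Gamma_pos_of_pos hz₀).ne'
  have Gamma_one_sub_ne_zero := (Real.Gamma_pos_of_pos (sub_pos.mpr hz₁)).ne'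
  rw [← Real.log_mul Gamma_ne_zero Gamma_one_sub_ne_zero,
    Real.Gamma_mul_Gamma_one_sub, ← Real.log_inv, inv_div]

theorem logBarnesG_one_sub {z : ℝ} (hz₀ : 0 < z) (hz₁ : z < 1) :
    logBarnesG (1 - z) =
      logBarnesG z + Real.log (Real.Gamma z) + z * Real.log (Real.sin (π * z) / π) +
        clausen2 (2 * π * z) / (2 * π) := by
  have log_Gamma : (Real.log (Real.Gamma z) : ℂ) + Real.log (Real.Gamma (1 - z)) =
      -Real.log (Real.sin (π * z) / π) := by
    exact_mod_cast log_Gamma_add_log_Gamma_one_sub hz₀ hz₁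
  simp only [logBarnesG, if_pos hz₁.le, if_pos (sub_le_self 1 hz₀.le), logBarnesG1p]
  push_cast
  linear_combination
    hurwitzZetaDerivNegOne_sub_one_sub hz₀.le hz₁.le - (z : ℂ) * log_Gamma

theorem log_sin_pi_div_four_div_pi :
    Real.log (Real.sin (π / 4) / π) = -(Real.log 2 / 2) - Real.log π := by
  rw [Real.sin_pi_div_four, Real.log_div (by positivity) Real.pi_ne_zero,
    Real.log_div (by positivity) two_ne_zero, Real.log_sqrt zero_le_two]
  ring

/-- log G(3/4) = log G(1/4) + K/(2π) − (log 2)/8 − (log π)/4 + log Γ(1/4). -/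
theorem logBarnesG_three_quarters :
    logBarnesG (3 / 4) =
      logBarnesG (1 / 4) + catalanConst / (2 * π) - (Real.log 2) / 8 - (Real.log π) / 4
        + Real.log (Real.Gamma (1 / 4)) := by
  have reflection := logBarnesG_one_sub (z := 1 / 4) (by norm_num) (by norm_num)
  rw [show (1 - 1 / 4 : ℝ) = 3 / 4 by norm_num, show π * (1 / 4) = π / 4 by ring,
    show 2 * π * (1 / 4) = π / 2 by ring, clausen2_pi_div_two,
    log_sin_pi_div_four_div_pi] at reflection
  rw [reflection]
  push_cast
  ring
end

section
/- The Barnes G-function satisfies log G(1/3) = 1/9 + (log 3)/72 + π/(18√3) − (2/3)·log Γ(1/3) − (4/3)·log A − ψ⁽¹⁾(1/3)/(12√3·π), where ψ⁽¹⁾ is the trigamma function. -/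
/-!
For `0 < x ≤ 1`, `log G(x) = (x - 1) log Γ(x) + ζ'(-1) - ζ'(-1, x)`, so everything rests on
`ζ'(-1, 1/3)`. Split `ζ(s, 1/3)` into its even and odd parts under `x ↦ 1 - x`. The distribution
relation `ζ(s) + ζ(s, 1/3) + ζ(s, 2/3) = 3 ^ s ζ(s)` turns the even part into
`(3 ^ s - 1) ζ(s) / 2`. The functional equation turns the derivative of the odd part at `-1`
into the value at `2` of the sine zeta function; a finite Fourier transform modulo `3` carries this
back to the odd part at `2`, which is `ζ(2, 1/3)` minus a multiple of `ζ(2)`. Finally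
`ζ(2, x) = ψ⁽¹⁾(x)` by differentiating the Weierstrass series of `log Γ` twice.
-/

open Real MeasureTheory Filter

/-! ### The Weierstrass series of `log Γ` and its derivatives -/

section GammaSeries

lemma summable_and_hasDerivAt_tsum_of_bounded_on_Ioo {ι E : Type*} [NormedAddCommGroup E]
    [NormedSpace ℝ E] [CompleteSpace E] {g g' : ι → ℝ → E} {c x₀ x : ℝ}
    (hg : ∀ i y, c < y → HasDerivAt (g i) (g' i y) y)
    (hg' : ∀ a b, c < a → ∃ u : ι → ℝ, Summable u ∧ ∀ i, ∀ y ∈ Set.Ioo a b, ‖g' i y‖ ≤ u i)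
    (hx₀ : c < x₀) (hsum : Summable (g · x₀)) (hx : c < x) :
    Summable (g · x) ∧ HasDerivAt (fun y => ∑' i, g i y) (∑' i, g' i x) x := by
  obtain ⟨a, hca, ha⟩ := exists_between (lt_min hx₀ hx)
  obtain ⟨b, hb⟩ := exists_gt (max x₀ x)
  obtain ⟨u, hu, hbound⟩ := hg' a b hca
  rw [lt_min_iff] at ha
  rw [max_lt_iff] at hb
  have hderiv : ∀ i y, y ∈ Set.Ioo a b → HasDerivAt (g i) (g' i y) y :=
    fun i y hy => hg i y (hca.trans hy.1)
  exact ⟨summable_of_summable_hasDerivAt_of_isPreconnected hu isOpen_Ioo isPreconnected_Ioo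
      hderiv hbound ⟨ha.1, hb.1⟩ hsum ⟨ha.2, hb.2⟩,
    hasDerivAt_tsum_of_isPreconnected hu isOpen_Ioo isPreconnected_Ioo
      hderiv hbound ⟨ha.1, hb.1⟩ hsum ⟨ha.2, hb.2⟩⟩

lemma summable_one_div_add_nat_sq (a : ℝ) : Summable fun n : ℕ => 1 / (a + n) ^ 2 := by
  simpa [add_comm] using (Real.summable_one_div_nat_add_rpow a 2).2 one_lt_two

/-- The terms of the Weierstrass series `log Γ(x) + γ (x - 1) = ∑ n, logGammaTerm n x`, each
normalised to vanish at `x = 1`. -/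
noncomputable def logGammaTerm (n : ℕ) (x : ℝ) : ℝ :=
  (x - 1) / (n + 1) - Real.log (x + n) + Real.log (n + 1)

/-- The terms of the series `ψ(x) + γ = ∑ n, digammaTerm n x` for the digamma function, each
vanishing at `x = 1`. -/
noncomputable def digammaTerm (n : ℕ) (x : ℝ) : ℝ := 1 / (n + 1) - 1 / (x + n)

variable {x : ℝ}

lemma hasDerivAt_logGammaTerm (n : ℕ) (hx : 0 < x) :
    HasDerivAt (logGammaTerm n) (digammaTerm n x) x :=
  ((((hasDerivAt_id x).sub_const 1).div_const _).sub
    (((hasDerivAt_id x).add_const _).log (by positivity))).add_const _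

lemma hasDerivAt_digammaTerm (n : ℕ) (hx : 0 < x) :
    HasDerivAt (digammaTerm n) (1 / (x + n) ^ 2) x :=
  (((hasDerivAt_const x 1).div ((hasDerivAt_id x).add_const (n : ℝ))
    (by positivity)).const_sub _).congr_deriv (by simp [neg_div])

lemma norm_digammaTerm_le {a b : ℝ} (ha : 0 < a) (n : ℕ) (hx : x ∈ Set.Ioo a b) :
    ‖digammaTerm n x‖ ≤ (b + 1) * (1 / (min a 1 + n) ^ 2) := by
  have hx0 : 0 < x := ha.trans hx.1
  have _ : 0 < min a 1 := lt_min ha one_pos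
  have hnum : |x - 1| ≤ b + 1 := abs_le.2 ⟨by linarith [hx.2], by linarith [hx.2]⟩
  calc ‖digammaTerm n x‖ = |x - 1| / (((n : ℝ) + 1) * (x + n)) := by
        rw [digammaTerm, div_sub_div _ _ (by positivity) (by positivity), Real.norm_eq_abs, abs_div,
          abs_of_pos (a := ((n : ℝ) + 1) * (x + n)) (by positivity)]
        congr 2
        ring
    _ ≤ (b + 1) / ((min a 1 + n) * (min a 1 + n)) := by
        have h1 : min a 1 + n ≤ (n : ℝ) + 1 := by linarith [min_le_right a 1]
        have h2 : min a 1 + n ≤ x + n := by linarith [min_le_left a 1, hx.1]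
        gcongr
        exact (abs_nonneg _).trans hnum
    _ = (b + 1) * (1 / (min a 1 + n) ^ 2) := by ring

lemma summable_and_hasDerivAt_tsum_logGammaTerm (hx : 0 < x) :
    Summable (logGammaTerm · x) ∧
      HasDerivAt (fun y => ∑' n, logGammaTerm n y) (∑' n, digammaTerm n x) x :=
  summable_and_hasDerivAt_tsum_of_bounded_on_Ioo (fun n _ hy => hasDerivAt_logGammaTerm n hy)
    (fun a b ha => ⟨_, (summable_one_div_add_nat_sq (min a 1)).mul_left (b + 1),
      fun n _ hy => norm_digammaTerm_le ha n hy⟩)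
    one_pos (by simp [logGammaTerm, add_comm, summable_zero]) hx

lemma hasDerivAt_tsum_digammaTerm (hx : 0 < x) :
    HasDerivAt (fun y => ∑' n, digammaTerm n y) (∑' n : ℕ, 1 / (x + n) ^ 2) x := by
  refine (summable_and_hasDerivAt_tsum_of_bounded_on_Ioo
    (fun n _ hy => hasDerivAt_digammaTerm n hy)
    (fun a _ ha => ⟨_, summable_one_div_add_nat_sq a, fun n y hy => ?_⟩)
    one_pos (by simp [digammaTerm, add_comm, summable_zero]) hx).2
  rw [Real.norm_of_nonneg (by positivity)]
  gcongr
  exact hy.1.le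

lemma sum_range_logGammaTerm (x : ℝ) (n : ℕ) :
    ∑ k ∈ Finset.range (n + 1), logGammaTerm k x =
      Real.BohrMollerup.logGammaSeq x n + (x - 1) * (harmonic (n + 1) - Real.log (n + 1)) +
        x * (Real.log (n + 1) - Real.log n) := by
  have hharm : ∑ k ∈ Finset.range (n + 1), (x - 1) / ((k : ℝ) + 1) =
      (x - 1) * harmonic (n + 1) := by
    simp [harmonic, Finset.mul_sum, div_eq_mul_inv]
  have hfact : ∑ k ∈ Finset.range (n + 1), Real.log ((k : ℝ) + 1) =
      Real.log (n + 1) + Real.log n.factorial := by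
    rw [← Real.log_mul (by positivity) (by positivity), ← Real.log_prod (by intros; positivity)]
    norm_cast
    rw [Finset.prod_range_add_one_eq_factorial, Nat.factorial_succ]
  simp only [logGammaTerm, Finset.sum_add_distrib, Finset.sum_sub_distrib, hharm, hfact,
    Real.BohrMollerup.logGammaSeq]
  ring

lemma tsum_logGammaTerm (hx : 0 < x) :
    ∑' n, logGammaTerm n x = Real.log (Real.Gamma x) + eulerMascheroniConstant * (x - 1) := by
  have hseq := (summable_and_hasDerivAt_tsum_logGammaTerm hx).1.hasSum.tendsto_sum_nat.comp
    (tendsto_add_atTop_nat 1)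
  have hharm : Tendsto (fun n : ℕ => (harmonic (n + 1) : ℝ) - Real.log (n + 1)) atTop
      (nhds eulerMascheroniConstant) := by
    simpa [Function.comp_def] using tendsto_harmonic_sub_log.comp (tendsto_add_atTop_nat 1)
  refine tendsto_nhds_unique hseq ?_
  simpa [Function.comp_def, sum_range_logGammaTerm, mul_comm] using
    ((Real.BohrMollerup.tendsto_log_gamma hx).add (hharm.const_mul (x - 1))).add
      (tendsto_log_nat_add_one_sub_log.const_mul x)

lemma digamma_eq_tsum (hx : 0 < x) :
    digamma x = ∑' n, digammaTerm n x - eulerMascheroniConstant := by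
  have hderiv := (summable_and_hasDerivAt_tsum_logGammaTerm hx).2.sub
    (((hasDerivAt_id x).sub_const 1).const_mul eulerMascheroniConstant)
  rw [mul_one] at hderiv
  refine (hderiv.congr_of_eventuallyEq ?_).deriv
  filter_upwards [lt_mem_nhds hx] with y hy
  simp [tsum_logGammaTerm hy]

lemma hasSum_trigamma (hx : 0 < x) :
    HasSum (fun n : ℕ => 1 / (x + n) ^ 2) (trigamma x) := by
  have hderiv : HasDerivAt digamma (∑' n : ℕ, 1 / (x + n) ^ 2) x := by
    refine ((hasDerivAt_tsum_digammaTerm hx).sub_const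
      eulerMascheroniConstant).congr_of_eventuallyEq ?_
    filter_upwards [lt_mem_nhds hx] with y hy using digamma_eq_tsum hy
  have htrigamma : trigamma x = ∑' n : ℕ, 1 / (x + n) ^ 2 := hderiv.deriv
  exact htrigamma ▸ (summable_one_div_add_nat_sq x).hasSum

lemma hurwitzZeta_two_eq_trigamma (hx : x ∈ Set.Ioc 0 1) :
    HurwitzZeta.hurwitzZeta (x : UnitAddCircle) 2 = trigamma x := by
  refine (HurwitzZeta.hasSum_hurwitzZeta_of_one_lt_re (Set.Ioc_subset_Icc_self hx)
    (by norm_num)).unique ?_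
  simpa [add_comm] using Complex.hasSum_ofReal.2 (hasSum_trigamma hx.1)

end GammaSeries

/-! ### Hurwitz zeta functions at rational arguments -/

section HurwitzZeta

open HurwitzZeta ZMod

lemma sum_hurwitzZeta_toAddCircle (N : ℕ) [NeZero N] {s : ℂ} (hs : s ≠ 1) :
    ∑ j : ZMod N, hurwitzZeta (toAddCircle j) s = N ^ s * riemannZeta s := by
  have h := LFunction_stdAddChar_eq_expZeta (0 : ZMod N) s (.inr hs)
  have hN : (N : ℂ) ^ s ≠ 0 := by simp [Complex.cpow_eq_zero_iff, NeZero.ne N]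
  simp only [LFunction, zero_mul, AddChar.map_zero_eq_one, one_mul, map_zero, expZeta_zero,
    Complex.cpow_neg] at h
  rw [← h, mul_inv_cancel_left₀ hN]

lemma sinZeta_toAddCircle {N : ℕ} [NeZero N] (j : ZMod N) (s : ℂ) :
    sinZeta (toAddCircle j) s =
      N ^ (-s) *
        ∑ k : ZMod N, ((stdAddChar (j * k) : ℂ).im : ℂ) * hurwitzZeta (toAddCircle k) s := by
  rcases eq_or_ne j 0 with rfl | hj
  · have hodd := sinZeta_neg 0 s
    rw [neg_zero, self_eq_neg] at hodd
    simp [hodd]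
  have him (k : ZMod N) : ((stdAddChar (j * k) : ℂ).im : ℂ) =
      (stdAddChar (j * k) - stdAddChar (-j * k)) / (2 * Complex.I) := by
    rw [Complex.im_eq_sub_conj, neg_mul, AddChar.map_neg_eq_conj]
  rw [sinZeta_eq, ← map_neg, ← LFunction_stdAddChar_eq_expZeta j s (.inl hj),
    ← LFunction_stdAddChar_eq_expZeta (-j) s (.inl (neg_ne_zero.2 hj))]
  simp only [LFunction, him, ← mul_sub, ← Finset.sum_sub_distrib, ← sub_mul, mul_div_assoc,
    div_mul_eq_mul_div, Finset.sum_div]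

lemma hurwitzZetaOdd_of_re_lt_one (a : UnitAddCircle) {s : ℂ} (hs : s.re < 1) :
    hurwitzZetaOdd a s = 2 * (2 * π) ^ (s - 1) * Complex.Gamma (1 - s) *
      sinZeta a (1 - s) * Complex.sin (π * (1 - s) / 2) := by
  have h := hurwitzZetaOdd_one_sub a (s := 1 - s) fun m hm => by
    have hre := congrArg Complex.re hm
    simp only [Complex.sub_re, Complex.one_re, Complex.neg_re, Complex.natCast_re] at hre
    linarith [m.cast_nonneg (α := ℝ)]
  rw [sub_sub_cancel, neg_sub] at h
  rw [h]
  ring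

lemma hasDerivAt_hurwitzZetaOdd_neg_two_mul_nat_sub_one (a : UnitAddCircle) (n : ℕ) :
    HasDerivAt (hurwitzZetaOdd a)
      ((-1) ^ n * π * (2 * n + 1).factorial / (2 * π) ^ (2 * n + 2) * sinZeta a (2 * n + 2))
      (-2 * n - 1) := by
  have hpt : (1 - (-2 * n - 1) : ℂ) = (2 * n + 1 : ℕ) + 1 := by push_cast; ring
  have hone_sub (s : ℂ) : HasDerivAt (fun z : ℂ => 1 - z) (-1) s := (hasDerivAt_id s).const_sub 1
  have hangle : (π * (1 - (-2 * n - 1)) / 2 : ℂ) = n * π + π := by ring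
  have hsin : HasDerivAt (fun s : ℂ => Complex.sin (π * (1 - s) / 2))
      ((-1) ^ n * π / 2) (-2 * n - 1) := by
    refine (((hone_sub _).const_mul (π : ℂ)).div_const 2).csin.congr_deriv ?_
    have hcos : Complex.cos (n * π) = (-1) ^ n := by
      simpa using Complex.cos_antiperiodic.add_nat_mul_eq (x := 0) n
    rw [hangle, Complex.cos_add_pi, hcos]
    ring
  have hfactor : DifferentiableAt ℂ (fun s : ℂ => 2 * (2 * π : ℂ) ^ (s - 1) *
      Complex.Gamma (1 - s) * sinZeta a (1 - s)) (-2 * n - 1) := by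
    have hGamma : DifferentiableAt ℂ Complex.Gamma (1 - (-2 * n - 1)) := by
      rw [hpt]
      exact Complex.differentiableAt_Gamma_nat_add_one _
    have hsub := (hone_sub (-2 * n - 1)).differentiableAt
    exact (((differentiableAt_id.sub_const 1).const_cpow
      (.inl (by simp [Real.pi_ne_zero]))).const_mul 2).mul (hGamma.comp _ hsub) |>.mul
        ((differentiableAt_sinZeta a _).comp _ hsub)
  have hre : (-2 * n - 1 : ℂ).re < 1 := by
    simpa using by linarith [n.cast_nonneg (α := ℝ)]
  refine ((hfactor.hasDerivAt.mul hsin).congr_of_eventuallyEq ?_).congr_deriv ?_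
  · filter_upwards [Complex.continuous_re.continuousAt.eventually_lt_const hre] with s hs
    exact hurwitzZetaOdd_of_re_lt_one a hs
  · have hpow : (2 * π : ℂ) ^ (-2 * n - 1 - 1 : ℂ) = ((2 * π : ℂ) ^ (2 * n + 2))⁻¹ := by
      rw [← Complex.cpow_natCast, ← Complex.cpow_neg]
      push_cast
      ring_nf
    rw [hangle, Complex.sin_add_pi, Complex.sin_nat_mul_pi, hpow, hpt,
      Complex.Gamma_nat_eq_factorial]
    push_cast
    ring_nf

lemma sum_zmod_three {M : Type*} [AddCommMonoid M] (f : ZMod 3 → M) :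
    ∑ j, f j = f 0 + f 1 + f 2 :=
  Fin.sum_univ_three f

lemma toAddCircle_one_zmod_three : toAddCircle (1 : ZMod 3) = ((1 / 3 : ℝ) : UnitAddCircle) := by
  simpa using toAddCircle_intCast (N := 3) 1

lemma toAddCircle_two_zmod_three : toAddCircle (2 : ZMod 3) = -((1 / 3 : ℝ) : UnitAddCircle) := by
  rw [show (2 : ZMod 3) = -1 from rfl, map_neg, toAddCircle_one_zmod_three]

lemma hurwitzZetaEven_one_third {s : ℂ} (hs : s ≠ 1) :
    hurwitzZetaEven ((1 / 3 : ℝ) : UnitAddCircle) s = (3 ^ s - 1) * riemannZeta s / 2 := by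
  have h := sum_hurwitzZeta_toAddCircle 3 hs
  rw [sum_zmod_three, map_zero, hurwitzZeta_zero, toAddCircle_one_zmod_three,
    toAddCircle_two_zmod_three, hurwitzZeta, hurwitzZeta, hurwitzZetaEven_neg,
    hurwitzZetaOdd_neg, Nat.cast_ofNat] at h
  linear_combination h / 2

lemma im_stdAddChar_one_zmod_three : (stdAddChar (1 : ZMod 3) : ℂ).im = √3 / 2 := by
  have h := stdAddChar_coe (N := 3) 1
  rw [Int.cast_one] at h
  have hangle : (2 * π * Complex.I * (1 : ℤ) / (3 : ℕ) : ℂ) = (π - π / 3 : ℝ) * Complex.I := by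
    push_cast
    ring
  rw [h, hangle, Complex.exp_ofReal_mul_I_im, Real.sin_pi_sub, Real.sin_pi_div_three]

lemma sinZeta_one_third (s : ℂ) :
    sinZeta ((1 / 3 : ℝ) : UnitAddCircle) s =
      3 ^ (-s) * √3 * hurwitzZetaOdd ((1 / 3 : ℝ) : UnitAddCircle) s := by
  have him_two : (stdAddChar (2 : ZMod 3) : ℂ).im = -(√3 / 2) := by
    rw [show (2 : ZMod 3) = -1 from rfl, AddChar.map_neg_eq_conj, Complex.conj_im,
      im_stdAddChar_one_zmod_three]
  rw [← toAddCircle_one_zmod_three, sinZeta_toAddCircle]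
  simp only [one_mul, sum_zmod_three, AddChar.map_zero_eq_one, Complex.one_im, him_two,
    im_stdAddChar_one_zmod_three, toAddCircle_one_zmod_three, toAddCircle_two_zmod_three,
    hurwitzZeta, hurwitzZetaEven_neg, hurwitzZetaOdd_neg]
  push_cast
  ring

lemma hurwitzZetaOdd_one_third_two :
    hurwitzZetaOdd ((1 / 3 : ℝ) : UnitAddCircle) 2 = trigamma (1 / 3) - 2 * π ^ 2 / 3 := by
  have h := hurwitzZeta_two_eq_trigamma (x := 1 / 3) (by norm_num)
  rw [hurwitzZeta, hurwitzZetaEven_one_third (by norm_num), riemannZeta_two,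
    Complex.cpow_ofNat] at h
  linear_combination h

lemma riemannZeta_neg_one : riemannZeta (-1) = -1 / 12 := by
  have h := riemannZeta_neg_nat_eq_bernoulli 1
  rw [show 1 + 1 = 2 from rfl, bernoulli_two, Nat.cast_one] at h
  rw [h]
  norm_num

lemma hasDerivAt_hurwitzZetaEven_one_third :
    HasDerivAt (hurwitzZetaEven ((1 / 3 : ℝ) : UnitAddCircle))
      (-Real.log 3 / 72 - deriv riemannZeta (-1) / 3) (-1) := by
  have hpow : HasDerivAt (fun s : ℂ => (3 : ℂ) ^ s - 1) (Real.log 3 / 3) (-1) := by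
    refine (((hasDerivAt_id (-1 : ℂ)).const_cpow (.inl three_ne_zero)).sub_const 1).congr_deriv ?_
    simp only [id_eq, Complex.cpow_neg_one, mul_one, Complex.ofNat_log]
    ring
  have hzeta := (differentiableAt_riemannZeta (s := -1) (by norm_num)).hasDerivAt
  refine (((hpow.mul hzeta).div_const 2).congr_of_eventuallyEq ?_).congr_deriv ?_
  · filter_upwards [isOpen_ne.mem_nhds (show (-1 : ℂ) ≠ 1 by norm_num)] with s hs
    exact hurwitzZetaEven_one_third hs
  · rw [riemannZeta_neg_one, Complex.cpow_neg_one]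
    ring

lemma hasDerivAt_hurwitzZeta_one_third :
    HasDerivAt (hurwitzZeta ((1 / 3 : ℝ) : UnitAddCircle))
      (-Real.log 3 / 72 - deriv riemannZeta (-1) / 3 +
        trigamma (1 / 3) / (12 * √3 * π) - π / (18 * √3)) (-1) := by
  have hpi : (π : ℂ) ≠ 0 := mod_cast Real.pi_ne_zero
  have hodd (a : UnitAddCircle) :
      HasDerivAt (hurwitzZetaOdd a) (π / (2 * π) ^ 2 * sinZeta a 2) (-1) := by
    simpa using hasDerivAt_hurwitzZetaOdd_neg_two_mul_nat_sub_one a 0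
  refine (hasDerivAt_hurwitzZetaEven_one_third.add (hodd _)).congr_deriv ?_
  rw [sinZeta_one_third, hurwitzZetaOdd_one_third_two, Complex.cpow_neg, Complex.cpow_ofNat]
  have hsqrt : (√3 : ℂ) = 3 / √3 := mod_cast (Real.div_sqrt (x := 3)).symm
  conv_lhs => rw [hsqrt]
  field_simp
  ring

end HurwitzZeta

lemma logBarnesG_of_le_one {x : ℝ} (hx : x ≤ 1) :
    logBarnesG x = (x - 1) * Real.log (Real.Gamma x) + deriv riemannZeta (-1) -
      deriv (HurwitzZeta.hurwitzZeta (x : UnitAddCircle)) (-1) := by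
  have hceil : ⌈x⌉₊ - 1 = 0 := Nat.sub_eq_zero_of_le (Nat.ceil_le.2 (by simpa using hx))
  have hderiv : hurwitzZetaDerivNegOne x =
      deriv (HurwitzZeta.hurwitzZeta (x : UnitAddCircle)) (-1) := by
    simp only [hurwitzZetaDerivNegOne, hurwitzZetaReal, hceil, Finset.range_zero,
      Finset.sum_empty, sub_zero]
  rw [logBarnesG, if_pos hx, logBarnesG1p, hderiv]
  ring

/-- log G(1/3) in terms of Γ(1/3), A and the trigamma function. -/
theorem logBarnesG_one_third :
    logBarnesG (1 / 3) =
      1 / 9 + (Real.log 3) / 72 + π / (18 * Real.sqrt 3)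
        - (2 / 3) * Real.log (Real.Gamma (1 / 3)) - (4 / 3) * logA
        - trigamma (1 / 3) / (12 * Real.sqrt 3 * π) := by
  rw [logBarnesG_of_le_one (by norm_num), hasDerivAt_hurwitzZeta_one_third.deriv, logA]
  push_cast
  ring
end
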